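/- Suppose J ∈ C¹(X) satisfies (I1)–(I8). Then: (a) c_ℳ ≥ a > 0 and 𝒥 := J∘m has a Cerami sequence at level c_ℳ, i.e. a sequence u_n ∈ X⁺ with 𝒥(u_n) → c_ℳ and (1+‖u_n‖)𝒥′(u_n) → 0; (b) c_ℳ = c_𝒩 := inf_{𝒩} J. -/

import Mathlib

/-!
STATEMENT 2.  Abstract critical point theorem: if J ∈ C¹(X) on X = X⁺ ⊕ X⁻
(X reflexive Banach, X⁺ Hilbert) satisfies (I1)–(I8), then (a) c_ℳ ≥ a > 0 and
𝒥 = J∘m admits a Cerami sequence at level c_ℳ; (b) c_ℳ = c_𝒩 = inf_𝒩 J.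
-/

open Filter Topology

noncomputable section

variable {P Q : Type*}
  [NormedAddCommGroup P] [InnerProductSpace ℝ P] [CompleteSpace P]
  [NormedAddCommGroup Q] [NormedSpace ℝ Q] [CompleteSpace Q]

/-- The norm ‖u‖ = (‖u⁺‖² + ‖u⁻‖²)^{1/2} on X = X⁺ ⊕ X⁻. -/
def XNorm (u : P × Q) : ℝ := Real.sqrt (‖u.1‖ ^ 2 + ‖u.2‖ ^ 2)

/-- Convergence in the 𝒯 topology: norm convergence in X⁺, weak convergence in X⁻. -/
def TConv (u : ℕ → P × Q) (v : P × Q) : Prop :=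
  Tendsto (fun n => (u n).1) atTop (nhds v.1) ∧
    ∀ ℓ : Q →L[ℝ] ℝ, Tendsto (fun n => ℓ (u n).2) atTop (nhds (ℓ v.2))

/-- The functional J(u) = ½‖u⁺‖² − I(u). -/
def Jfun (I : P × Q → ℝ) (u : P × Q) : ℝ := ‖u.1‖ ^ 2 / 2 - I u

/-- ℳ = {u : I′(u)|_{X⁻} = 0}. -/
def MSet (I : P × Q → ℝ) : Set (P × Q) :=
  {u | ∀ v : Q, fderiv ℝ I u (0, v) = 0}

/-- 𝒩 = {u ∈ ℳ ∖ X⁻ : J′(u)(u) = 0}. -/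
def NSet (I : P × Q → ℝ) : Set (P × Q) :=
  {u | u ∈ MSet I ∧ u.1 ≠ 0 ∧ fderiv ℝ (Jfun I) u u = 0}

/-- The hypotheses (I1)–(I8) on I (with the data r, a of (I6)). -/
structure HypI (I : P × Q → ℝ) (r a : ℝ) : Prop where
  refl : Function.Surjective (NormedSpace.inclusionInDoubleDual ℝ Q)
  i1 : ContDiff ℝ 1 I ∧ I 0 = 0 ∧ ∀ u, 0 ≤ I u
  i2 : ∀ (u : ℕ → P × Q) (v : P × Q), TConv u v →
    ∀ c : ℝ, c < I v → ∀ᶠ n in atTop, c < I (u n)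
  i3 : ∀ (u : ℕ → P × Q) (v : P × Q), TConv u v →
    Tendsto (fun n => I (u n)) atTop (nhds (I v)) → Tendsto u atTop (nhds v)
  i4 : ∀ M : ℝ, ∃ R : ℝ, ∀ u : P × Q, R ≤ XNorm u → M ≤ ‖u.1‖ + I u
  i5 : ∀ u ∈ MSet I, ∀ v : Q, v ≠ 0 → I u < I (u + (0, v))
  i6 : 0 < r ∧ a = sInf {y : ℝ | ∃ p : P, ‖p‖ = r ∧ y = Jfun I (p, 0)} ∧ 0 < a
  i7 : ∀ (t : ℕ → ℝ) (u : ℕ → P × Q) (p : P), Tendsto t atTop atTop →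
    Tendsto (fun n => (u n).1) atTop (nhds p) → p ≠ 0 →
    Tendsto (fun n => I (t n • u n) / t n ^ 2) atTop atTop
  i8 : ∀ u ∈ NSet I, ∀ t : ℝ, 0 ≤ t → ∀ v : Q,
    (t ^ 2 - 1) / 2 * fderiv ℝ I u u + I u - I (t • u + (0, v)) ≤ 0

/-- The map m : X⁺ → ℳ (u⁺ ↦ unique point of (u⁺ + X⁻) ∩ ℳ). -/
structure IsMMap (I : P × Q → ℝ) (m : P → P × Q) : Prop where
  mem : ∀ p : P, m p ∈ MSet I ∧ (m p).1 = p
  uniq : ∀ (p : P) (w : P × Q), w ∈ MSet I → w.1 = p → w = m p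

/-- The mountain pass value c_ℳ over paths in ℳ. -/
def cM (I : P × Q → ℝ) (r : ℝ) : ℝ :=
  sInf {y : ℝ | ∃ γ : C(Set.Icc (0:ℝ) 1, P × Q),
    (∀ t, γ t ∈ MSet I) ∧ γ ⟨0, by norm_num⟩ = 0 ∧
    r < ‖(γ ⟨1, by norm_num⟩).1‖ ∧ Jfun I (γ ⟨1, by norm_num⟩) < 0 ∧
    y = sSup (Set.range fun t => Jfun I (γ t))}


/-!
The values `J (m p)` are the maxima of `J` on the fibers `p + X⁻`. Since `m` is continuous by weak
compactness, `𝒥 = J ∘ m` is therefore `C¹` with `𝒥' = J' ∘ m` on `X⁺`, and critical points of `𝒥`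
in radial directions correspond to points of `𝒩`. Along a ray, `𝒥` is maximal at every point of its
Nehari set, while every mountain pass path has to cross this set: the rays are optimal paths and the
two levels agree. If there were no almost critical point near this level, flowing along a descent
field would improve an almost optimal path chosen by Ekeland's principle; measuring paths in the
metric pulled back by `ceramiEmbedding` gains the weight `1 + ‖u‖`.
-/

section WeakCompactness

open TopologicalSpace

variable {E : Type*} [NormedAddCommGroup E] [NormedSpace ℝ E]

theorem exists_seq_strongDual_separating_of_isSeparable {s : Set E} (hs : IsSeparable s) :
    ∃ f : ℕ → StrongDual ℝ E, ∀ w ∈ s, (∀ n, f n w = 0) → w = 0 := by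
  obtain rfl | hne := s.eq_empty_or_nonempty
  · exact ⟨0, by simp⟩
  obtain ⟨D, hDc, hsD⟩ := hs
  obtain ⟨d, rfl⟩ := hDc.exists_eq_range (closure_nonempty_iff.mp (hne.mono hsD))
  choose f hf_norm hf_apply using fun n => exists_dual_vector'' ℝ (d n)
  refine ⟨f, fun w hw hfw => ?_⟩
  by_contra hw0
  obtain ⟨_, ⟨n, rfl⟩, hn⟩ :=
    Metric.mem_closure_iff.mp (hsD hw) (‖w‖ / 2) (half_pos (norm_pos_iff.mpr hw0))
  rw [dist_eq_norm] at hn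
  have hdn : ‖d n‖ ≤ ‖w - d n‖ := by
    simpa [hfw n, hf_apply n] using (f n).le_of_opNorm_le (hf_norm n) (w - d n)
  linarith [norm_le_norm_add_norm_sub' w (d n)]

theorem continuous_strongDual_comp_toWeakSpace_symm (f : StrongDual ℝ E) :
    Continuous fun x : WeakSpace ℝ E => f ((toWeakSpace ℝ E).symm x) :=
  WeakBilin.eval_continuous (topDualPairing ℝ E).flip f

theorem isSeqCompact_weakSpace_of_isSeparable {K : Set (WeakSpace ℝ E)} (hK : IsCompact K)
    (hsep : IsSeparable (toWeakSpace ℝ E ⁻¹' K)) : IsSeqCompact K := by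
  have : CompactSpace K := isCompact_iff_compactSpace.mp hK
  obtain ⟨f, hf⟩ := exists_seq_strongDual_separating_of_isSeparable
    ((hsep.prod hsep).image continuous_sub)
  have : MetrizableSpace K := by
    refine Metric.PiNatEmbed.TopologicalSpace.MetrizableSpace.of_countable_separating
      (fun n (x : K) => f n ((toWeakSpace ℝ E).symm x))
      (fun n => (continuous_strongDual_comp_toWeakSpace_symm (f n)).comp continuous_subtype_val)
      fun x y hxy => ?_
    by_contra! hfxy
    refine hxy (Subtype.ext ((toWeakSpace ℝ E).symm.injective (sub_eq_zero.mp ?_)))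
    refine hf _ ⟨((toWeakSpace ℝ E).symm x, (toWeakSpace ℝ E).symm y), ?_, rfl⟩
      fun n => by rw [map_sub, hfxy n, sub_self]
    simp
  simpa using IsSeqCompact.range (continuous_subtype_val (p := (· ∈ K))).seqContinuous

theorem isSeparable_preimage_closure_range_toWeakSpace (u : ℕ → E) :
    IsSeparable (toWeakSpace ℝ E ⁻¹' closure (toWeakSpace ℝ E '' Set.range u)) := by
  refine ((Set.countable_range u).isSeparable.span (R := ℝ)).closure.mono ?_
  rw [← Set.preimage_image_eq (closure _) (toWeakSpace ℝ E).injective,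
    (Submodule.convex _).toWeakSpace_closure ℝ]
  gcongr
  exact Submodule.subset_span

theorem exists_subseq_tendsto_weakly_of_reflexive
    (hrefl : Function.Surjective (NormedSpace.inclusionInDoubleDual ℝ E))
    {u : ℕ → E} {C : ℝ} (hu : ∀ n, ‖u n‖ ≤ C) :
    ∃ (v : E) (φ : ℕ → ℕ), StrictMono φ ∧
      ∀ f : StrongDual ℝ E, Tendsto (fun n => f (u (φ n))) atTop (𝓝 (f v)) := by
  set S : Set (WeakSpace ℝ E) := toWeakSpace ℝ E '' Set.range u
  have hcompact : IsCompact (closure S) := by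
    refine NormedSpace.isCompact_closure_of_isBounded ℝ E S ?_ fun x _ => ?_
    · rw [Set.preimage_image_eq _ (toWeakSpace ℝ E).injective]
      exact isBounded_iff_forall_norm_le.mpr ⟨C, Set.forall_mem_range.mpr hu⟩
    · obtain ⟨y, hy⟩ := hrefl (WeakDual.toStrongDual x)
      exact ⟨toWeakSpace ℝ E y, DFunLike.ext _ _ (DFunLike.congr_fun hy)⟩
  obtain ⟨k, -, φ, hφ, hlim⟩ :=
    (isSeqCompact_weakSpace_of_isSeparable hcompact
      (isSeparable_preimage_closure_range_toWeakSpace u))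
      fun n => subset_closure (Set.mem_image_of_mem _ (Set.mem_range_self n))
  exact ⟨(toWeakSpace ℝ E).symm k, φ, hφ, fun f =>
    ((continuous_strongDual_comp_toWeakSpace_symm f).tendsto k).comp hlim⟩

end WeakCompactness

section Ekeland

variable {X : Type*} [PseudoMetricSpace X] {Φ : X → ℝ} {ε : ℝ} {x y : X}

/-- The lower section of `x` for the Bishop–Phelps order of `Φ` with slope `ε`, whose minimal
elements are the points produced by Ekeland's variational principle. -/
def descentSet (Φ : X → ℝ) (ε : ℝ) (x : X) : Set X :=
  {y | Φ y + ε * dist x y ≤ Φ x}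

theorem self_mem_descentSet : x ∈ descentSet Φ ε x := by
  simp [descentSet]

theorem isClosed_descentSet (hΦ : LowerSemicontinuous Φ) :
    IsClosed (descentSet Φ ε x) :=
  (hΦ.add (by fun_prop : Continuous fun y => ε * dist x y).lowerSemicontinuous).isClosed_preimage _

theorem descentSet_subset_of_mem (hε : 0 ≤ ε) (hy : y ∈ descentSet Φ ε x) :
    descentSet Φ ε y ⊆ descentSet Φ ε x := by
  intro z hz
  have htriangle : ε * dist x z ≤ ε * (dist x y + dist y z) := by
    gcongr
    exact dist_triangle x y z
  simp only [descentSet, Set.mem_ofPred_eq] at hy hz ⊢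
  linarith

theorem exists_mem_descentSet_forall_dist_le (hbdd : BddBelow (Set.range Φ)) (hε : 0 < ε)
    {η : ℝ} (hη : 0 < η) (x : X) :
    ∃ y ∈ descentSet Φ ε x, ∀ z ∈ descentSet Φ ε y, dist y z ≤ η := by
  have hne : (Φ '' descentSet Φ ε x).Nonempty := ⟨_, x, self_mem_descentSet, rfl⟩
  obtain ⟨_, ⟨y, hy, rfl⟩, hlt⟩ := Real.lt_sInf_add_pos hne (mul_pos hε hη)
  refine ⟨y, hy, fun z hz => le_of_mul_le_mul_left ?_ hε⟩
  have hinf : sInf (Φ '' descentSet Φ ε x) ≤ Φ z :=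
    csInf_le (hbdd.mono (Set.image_subset_range _ _))
      (Set.mem_image_of_mem Φ (descentSet_subset_of_mem hε.le hy hz))
  simp only [descentSet, Set.mem_ofPred_eq] at hz
  linarith

theorem exists_ekeland_point {X : Type*} [MetricSpace X] [CompleteSpace X] {Φ : X → ℝ}
    (hΦ : LowerSemicontinuous Φ) (hbdd : BddBelow (Set.range Φ)) (hε : 0 < ε) (x₀ : X) :
    ∃ x ∈ descentSet Φ ε x₀, ∀ y ≠ x, Φ x < Φ y + ε * dist x y := by
  choose next hnext_mem hnext_dist using fun n : ℕ =>
    exists_mem_descentSet_forall_dist_le hbdd hε (pow_pos (one_half_pos (α := ℝ)) n)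
  let u : ℕ → X := fun n => Nat.rec x₀ next n
  have hanti : Antitone fun n => descentSet Φ ε (u n) :=
    antitone_nat_of_succ_le fun n => descentSet_subset_of_mem hε.le (hnext_mem n (u n))
  have hmem : ∀ {n k}, n ≤ k → u k ∈ descentSet Φ ε (u n) := fun h => hanti h self_mem_descentSet
  have hpow : Tendsto (fun n : ℕ => (1 / 2 : ℝ) ^ n) atTop (𝓝 0) :=
    tendsto_pow_atTop_nhds_zero_of_lt_one (by norm_num) (by norm_num)
  obtain ⟨x, hx⟩ : ∃ x, Tendsto (fun n => u (n + 1)) atTop (𝓝 x) :=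
    cauchySeq_tendsto_of_complete <| cauchySeq_of_le_tendsto_0' _
      (fun n k hnk => hnext_dist n (u n) _ (hmem (Nat.succ_le_succ hnk))) hpow
  have hxmem : ∀ n, x ∈ descentSet Φ ε (u n) := fun n =>
    (isClosed_descentSet hΦ).mem_of_tendsto hx <|
      (eventually_ge_atTop n).mono fun k hk => hmem (hk.trans k.le_succ)
  refine ⟨x, hxmem 0, fun y hyx => ?_⟩
  by_contra! hy
  have hydist : ∀ n, dist (u (n + 1)) y ≤ (1 / 2 : ℝ) ^ n := fun n =>
    hnext_dist n (u n) y (descentSet_subset_of_mem hε.le (hxmem (n + 1)) hy)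
  exact hyx (tendsto_nhds_unique (tendsto_iff_dist_tendsto_zero.mpr
    (squeeze_zero (fun _ => dist_nonneg) hydist hpow)) hx)

theorem exists_ekeland_point_of_isClosedEmbedding {T X : Type*} [TopologicalSpace T]
    [MetricSpace X] [CompleteSpace X] {j : T → X} (hj : IsClosedEmbedding j) {Φ : T → ℝ}
    (hΦ : LowerSemicontinuous Φ) (hbdd : BddBelow (Set.range Φ)) (hε : 0 < ε) (x₀ : T) :
    ∃ x, Φ x ≤ Φ x₀ ∧ ∀ y ≠ x, Φ x < Φ y + ε * dist (j x) (j y) := by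
  let := hj.isEmbedding.comapMetricSpace j
  have hiso : Isometry j := hj.isEmbedding.to_isometry
  have : CompleteSpace T :=
    (completeSpace_iff_isComplete_range hiso.isUniformInducing).mpr hj.isClosed_range.isComplete
  obtain ⟨x, hx, hmin⟩ := exists_ekeland_point hΦ hbdd hε x₀
  refine ⟨x, le_of_add_le_of_nonneg_left hx (by positivity), fun y hy => ?_⟩
  rw [hiso.dist_eq]
  exact hmin y hy

end Ekeland

section CeramiEmbedding

variable {E : Type*} [NormedAddCommGroup E] [NormedSpace ℝ E]

variable (E) in
/-- A closed embedding of `E` into `E × ℝ`. Near `x` it contracts distances by a factor of order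
`1 / (1 + ‖x‖)`, which turns the Palais–Smale sequences produced by Ekeland's principle into
Cerami sequences. -/
def ceramiEmbedding : C(E, E × ℝ) where
  toFun x := ((1 + ‖x‖)⁻¹ • x, Real.log (1 + ‖x‖))
  continuous_toFun := by
    have hpos : ∀ x : E, 1 + ‖x‖ ≠ 0 := fun x => by positivity
    fun_prop (disch := exact hpos _)

variable (E) in
/-- A continuous left inverse of `ceramiEmbedding`. -/
def ceramiEmbeddingInv : C(E × ℝ, E) where
  toFun y := Real.exp y.2 • y.1
  continuous_toFun := by fun_prop

theorem ceramiEmbeddingInv_comp_ceramiEmbedding :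
    (ceramiEmbeddingInv E).comp (ceramiEmbedding E) = ContinuousMap.id E := by
  ext x
  have hpos : 0 < 1 + ‖x‖ := by positivity
  simp [ceramiEmbeddingInv, ceramiEmbedding, Real.exp_log hpos, smul_smul, hpos.ne']

theorem isClosedEmbedding_ceramiEmbedding_comp (K : Type*) [TopologicalSpace K] :
    IsClosedEmbedding fun γ : C(K, E) => (ceramiEmbedding E).comp γ :=
  Function.LeftInverse.isClosedEmbedding (f := fun γ : C(K, E × ℝ) => (ceramiEmbeddingInv E).comp γ)
    (fun γ => ContinuousMap.ext fun t =>
      DFunLike.congr_fun ceramiEmbeddingInv_comp_ceramiEmbedding (γ t))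
    (ContinuousMap.continuous_postcomp _) (ContinuousMap.continuous_postcomp _)

theorem norm_inv_smul_sub_inv_smul_le {x y : E} {h : ℝ} (hxy : ‖x - y‖ ≤ h * (1 + ‖x‖)) :
    ‖(1 + ‖x‖)⁻¹ • x - (1 + ‖y‖)⁻¹ • y‖ ≤ 2 * h := by
  have hx : 0 < 1 + ‖x‖ := by positivity
  have hy : 0 < 1 + ‖y‖ := by positivity
  have hsplit : (1 + ‖x‖)⁻¹ • x - (1 + ‖y‖)⁻¹ • y =
      (1 + ‖x‖)⁻¹ • ((x - y) + ((‖y‖ - ‖x‖) * (1 + ‖y‖)⁻¹) • y) := by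
    have hcoeff : (1 + ‖x‖)⁻¹ * ((‖y‖ - ‖x‖) * (1 + ‖y‖)⁻¹) = (1 + ‖x‖)⁻¹ - (1 + ‖y‖)⁻¹ := by
      field_simp
      ring
    rw [smul_add, smul_smul, hcoeff]
    module
  have hsecond : ‖((‖y‖ - ‖x‖) * (1 + ‖y‖)⁻¹) • y‖ ≤ ‖x - y‖ := by
    rw [mul_smul, norm_smul, Real.norm_eq_abs]
    have hunit : ‖(1 + ‖y‖)⁻¹ • y‖ ≤ 1 := by
      rw [norm_smul, norm_inv, Real.norm_of_nonneg hy.le, inv_mul_le_one₀ hy]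
      linarith
    calc |‖y‖ - ‖x‖| * ‖(1 + ‖y‖)⁻¹ • y‖ ≤ |‖y‖ - ‖x‖| * 1 := by gcongr
      _ ≤ ‖x - y‖ := by rw [mul_one, norm_sub_rev]; exact abs_norm_sub_norm_le y x
  rw [hsplit, norm_smul, norm_inv, Real.norm_of_nonneg hx.le, inv_mul_le_iff₀ hx]
  linarith [norm_add_le (x - y) (((‖y‖ - ‖x‖) * (1 + ‖y‖)⁻¹) • y)]

theorem abs_log_sub_log_le {a b h : ℝ} (ha : 0 < a) (hh : h ≤ 1 / 2) (hab : |a - b| ≤ h * a) :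
    |Real.log a - Real.log b| ≤ 2 * h := by
  obtain ⟨hlow, hupp⟩ := abs_le.mp hab
  have hh₀ : 0 ≤ h := nonneg_of_mul_nonneg_left ((abs_nonneg _).trans hab) ha
  have hb : 0 < b := by nlinarith
  rw [abs_le, ← Real.log_div ha.ne' hb.ne', neg_le, ← Real.log_inv, inv_div]
  refine ⟨(Real.log_le_sub_one_of_pos (by positivity)).trans ?_,
    (Real.log_le_sub_one_of_pos (by positivity)).trans ?_⟩ <;>
  · rw [tsub_le_iff_right, div_le_iff₀ (by positivity)]
    nlinarith [mul_nonneg (mul_nonneg ha.le hh₀) (sub_nonneg.mpr hh)]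

theorem dist_ceramiEmbedding_le {x y : E} {h : ℝ} (hh : h ≤ 1 / 2)
    (hxy : ‖x - y‖ ≤ h * (1 + ‖x‖)) :
    dist (ceramiEmbedding E x) (ceramiEmbedding E y) ≤ 2 * h := by
  refine max_le ?_ ?_
  · rw [dist_eq_norm]
    exact norm_inv_smul_sub_inv_smul_le hxy
  · rw [Real.dist_eq]
    refine abs_log_sub_log_le (by positivity) hh ?_
    rw [add_sub_add_left_eq_sub]
    exact (abs_norm_sub_norm_le x y).trans hxy

end CeramiEmbedding

section MaxAlong

variable {K Y : Type*} [TopologicalSpace K] [TopologicalSpace Y] {F : Y → ℝ}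

/-- The supremum of `F` along the map `γ`, the quantity minimized in a minimax problem. It is `0`
by convention when `F` is unbounded along `γ`. -/
def maxAlong (F : Y → ℝ) (γ : C(K, Y)) : ℝ :=
  ⨆ t, F (γ t)

variable [CompactSpace K]

theorem bddAbove_range_comp (hF : Continuous F) (γ : C(K, Y)) :
    BddAbove (Set.range fun t => F (γ t)) :=
  (isCompact_range (hF.comp γ.continuous)).bddAbove

theorem apply_le_maxAlong (hF : Continuous F) (γ : C(K, Y)) (t : K) : F (γ t) ≤ maxAlong F γ :=
  le_ciSup (bddAbove_range_comp hF γ) t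

theorem lowerSemicontinuous_maxAlong (hF : Continuous F) :
    LowerSemicontinuous (maxAlong F : C(K, Y) → ℝ) :=
  lowerSemicontinuous_ciSup (bddAbove_range_comp hF) fun t =>
    (hF.comp (continuous_eval_const t)).lowerSemicontinuous

end MaxAlong

section Minimax

variable {E : Type*} [NormedAddCommGroup E] [NormedSpace ℝ E] {F : E → ℝ}

theorem exists_norm_lt_apply_lt_neg (f : StrongDual ℝ E) {ρ s : ℝ} (hρ : 0 < ρ)
    (hs : s < ρ * ‖f‖) : ∃ v : E, ‖v‖ < ρ ∧ f v < -s := by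
  obtain ⟨w, hw, hsw⟩ := f.exists_lt_apply_of_lt_opNorm
    (show s / ρ < ‖f‖ by rwa [div_lt_iff₀' hρ])
  rw [div_lt_iff₀' hρ, Real.norm_eq_abs] at hsw
  have hρw : ‖ρ • w‖ < ρ := by
    rw [norm_smul, Real.norm_of_nonneg hρ.le]
    exact mul_lt_of_lt_one_right hρ hw
  rcases abs_choice (f w) with habs | habs <;> rw [habs] at hsw
  · exact ⟨-(ρ • w), by rwa [norm_neg], by rw [map_neg, map_smul, smul_eq_mul]; linarith⟩
  · exact ⟨ρ • w, hρw, by rw [map_smul, smul_eq_mul]; linarith⟩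

theorem exists_continuous_descent_field (hF : ContDiff ℝ 1 F) {a b c s δ : ℝ} (hab : a < b)
    (hs : 0 ≤ s) (hsδ : s < δ)
    (hδ : ∀ u, F u ∈ Set.Icc b c → δ ≤ (1 + ‖u‖) * ‖fderiv ℝ F u‖) :
    ∃ V : C(E, E), ∀ u, ‖V u‖ ≤ 1 + ‖u‖ ∧ fderiv ℝ F u (V u) ≤ 0 ∧ (F u ≤ a → V u = 0) ∧
      (F u ∈ Set.Icc b c → fderiv ℝ F u (V u) ≤ -s) := by
  refine exists_continuous_forall_mem_convex_of_local_const
    (t := fun u => {v | ‖v‖ ≤ 1 + ‖u‖ ∧ fderiv ℝ F u v ≤ 0 ∧ (F u ≤ a → v = 0) ∧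
      (F u ∈ Set.Icc b c → fderiv ℝ F u v ≤ -s)}) (fun u => ?_) fun u => ?_
  · have himp {p : Prop} {S : Set E} (hS : Convex ℝ S) : Convex ℝ {v | p → v ∈ S} := by
      by_cases hp : p <;> simp [hp, hS, convex_univ]
    have hhalf (q : ℝ) : Convex ℝ {v | fderiv ℝ F u v ≤ q} :=
      convex_halfSpace_le (fderiv ℝ F u).toLinearMap.isLinear q
    have hball : Convex ℝ {v : E | ‖v‖ ≤ 1 + ‖u‖} := by
      simpa using convexOn_univ_norm.convex_le (1 + ‖u‖)
    exact hball.inter ((hhalf 0).inter ((himp (convex_singleton 0)).inter (himp (hhalf (-s)))))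
  · have hcont : Continuous F := hF.continuous
    by_cases hu : F u ∈ Set.Icc b c
    · obtain ⟨v, hvnorm, hv⟩ := exists_norm_lt_apply_lt_neg (fderiv ℝ F u)
        (by positivity : 0 < 1 + ‖u‖) (hsδ.trans_le (hδ u hu))
      have hderiv : Continuous fun w => fderiv ℝ F w v :=
        (hF.continuous_fderiv one_ne_zero).clm_apply continuous_const
      refine ⟨v, ?_⟩
      filter_upwards [(by fun_prop : Continuous fun w : E => 1 + ‖w‖).tendsto u |>.eventually
        (lt_mem_nhds hvnorm), (hderiv.tendsto u).eventually (gt_mem_nhds hv),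
        (hcont.tendsto u).eventually (lt_mem_nhds (hab.trans_le hu.1))] with w hw₁ hw₂ hw₃
      exact ⟨hw₁.le, by linarith, fun h => absurd h hw₃.not_ge, fun _ => hw₂.le⟩
    · refine ⟨0, ?_⟩
      filter_upwards [(isClosed_Icc.preimage hcont).isOpen_compl.mem_nhds hu] with w hw
      exact ⟨by rw [norm_zero]; positivity, by simp, fun _ => rfl, fun h => absurd h hw⟩

theorem eventually_forall_apply_add_smul_le {K : Type*} [TopologicalSpace K] [CompactSpace K]
    (hF : ContDiff ℝ 1 F) (x v : C(K, E)) {η : ℝ} (hη : 0 < η) :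
    ∀ᶠ h in 𝓝[>] (0 : ℝ), ∀ t,
      F (x t + h • v t) ≤ F (x t) + h * (fderiv ℝ F (x t) (v t) + η) := by
  have hderiv : ∀ᶠ h in 𝓝 (0 : ℝ), ∀ t ∈ Set.univ,
      fderiv ℝ F (x t + h • v t) (v t) < fderiv ℝ F (x t) (v t) + η := by
    refine isCompact_univ.eventually_forall_of_forall_eventually fun t _ => ?_
    have : Continuous (fderiv ℝ F) := hF.continuous_fderiv one_ne_zero
    refine ContinuousAt.eventually_lt (by fun_prop) (by fun_prop) ?_
    simpa using hη
  obtain ⟨ρ, hρ, hball⟩ := Metric.eventually_nhds_iff_ball.mp hderiv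
  filter_upwards [Ioo_mem_nhdsGT hρ] with h hh t
  have hray (s : ℝ) : HasDerivAt (fun s => F (x t + s • v t))
      (fderiv ℝ F (x t + s • v t) (v t)) s := by
    refine (hF.differentiable one_ne_zero _).hasFDerivAt.comp_hasDerivAt s ?_
    simpa using ((hasDerivAt_id s).smul_const (v t)).const_add (x t)
  have hmvt := (convex_Icc 0 h).image_sub_le_mul_sub_of_deriv_le
    (f := fun s => F (x t + s • v t)) (C := fderiv ℝ F (x t) (v t) + η)
    (fun s _ => (hray s).continuousAt.continuousWithinAt)
    (fun s _ => (hray s).differentiableAt.differentiableWithinAt)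
    (fun s hs => ?_) 0 (Set.left_mem_Icc.mpr hh.1.le) h (Set.right_mem_Icc.mpr hh.1.le) hh.1.le
  · simp only [zero_smul, add_zero, sub_zero] at hmvt
    linarith
  · rw [interior_Icc] at hs
    rw [(hray s).deriv]
    refine (hball s ?_ t trivial).le
    rw [Metric.mem_ball, Real.dist_0_eq_abs, abs_of_pos hs.1]
    exact hs.2.trans hh.2

variable {K : Type*} [TopologicalSpace K] [CompactSpace K]

theorem eventually_maxAlong_add_smul_le [Nonempty K] (hF : ContDiff ℝ 1 F) {γ : C(K, E)}
    {b s : ℝ} (hs : 0 < s) (v : C(K, E)) (hb : b < maxAlong F γ)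
    (hneg : ∀ t, fderiv ℝ F (γ t) (v t) ≤ 0)
    (hdesc : ∀ t, b ≤ F (γ t) → fderiv ℝ F (γ t) (v t) ≤ -s) :
    ∀ᶠ h in 𝓝[>] (0 : ℝ), maxAlong F (γ + h • v) ≤ maxAlong F γ - h * (s / 2) := by
  have hsmall : ∀ᶠ h in 𝓝 (0 : ℝ), b + h * (s / 2) < maxAlong F γ - h * (s / 2) :=
    ContinuousAt.eventually_lt (by fun_prop) (by fun_prop) (by simpa using hb)
  filter_upwards [eventually_forall_apply_add_smul_le hF γ v (half_pos hs),
    hsmall.filter_mono nhdsWithin_le_nhds, self_mem_nhdsWithin] with h hexp hlow hpos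
  refine ciSup_le fun t => (hexp t).trans ?_
  rcases le_or_gt b (F (γ t)) with ht | ht
  · have := mul_le_mul_of_nonneg_left (hdesc t ht) (le_of_lt hpos)
    linarith [apply_le_maxAlong hF.continuous γ t]
  · have := mul_nonpos_of_nonneg_of_nonpos (le_of_lt hpos) (hneg t)
    linarith

theorem exists_almost_minimal_maxAlong [CompleteSpace E] (hF : Continuous F) {S : Set C(K, E)}
    (hS : IsClosed S) {c ε : ℝ} (hc : ∀ γ ∈ S, c ≤ maxAlong F γ) (hε : 0 < ε) {γ₀ : C(K, E)}
    (hγ₀ : γ₀ ∈ S) :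
    ∃ γ ∈ S, maxAlong F γ ≤ maxAlong F γ₀ ∧ ∀ γ' ∈ S, ∀ h ∈ Set.Icc (0 : ℝ) (1 / 2),
      (∀ t, ‖γ t - γ' t‖ ≤ h * (1 + ‖γ t‖)) → maxAlong F γ ≤ maxAlong F γ' + ε * h := by
  obtain ⟨⟨γ, hγ⟩, hle, hmin⟩ := exists_ekeland_point_of_isClosedEmbedding
    ((isClosedEmbedding_ceramiEmbedding_comp K).comp hS.isClosedEmbedding_subtypeVal)
    ((lowerSemicontinuous_maxAlong hF).comp continuous_subtype_val)
    ⟨c, Set.forall_mem_range.mpr fun γ => hc γ γ.2⟩ (half_pos hε) ⟨γ₀, hγ₀⟩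
  refine ⟨γ, hγ, hle, fun γ' hγ' h hh hnorm => ?_⟩
  obtain rfl | hne := eq_or_ne γ γ'
  · exact le_add_of_nonneg_right (mul_nonneg hε.le hh.1)
  have hdist : dist ((ceramiEmbedding E).comp γ) ((ceramiEmbedding E).comp γ') ≤ 2 * h :=
    (ContinuousMap.dist_le (mul_nonneg zero_le_two hh.1)).mpr
      fun t => dist_ceramiEmbedding_le hh.2 (hnorm t)
  calc maxAlong F γ ≤ maxAlong F γ' +
        ε / 2 * dist ((ceramiEmbedding E).comp γ) ((ceramiEmbedding E).comp γ') :=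
      (hmin ⟨γ', hγ'⟩ (by simpa using hne.symm)).le
    _ ≤ maxAlong F γ' + ε / 2 * (2 * h) := by gcongr
    _ = maxAlong F γ' + ε * h := by ring

theorem exists_cerami_point_of_minimax [CompleteSpace E] (hF : ContDiff ℝ 1 F) {B : Set K}
    {γ₀ : C(K, E)} {c ε δ : ℝ} (hε : 0 < ε) (hδ : 0 < δ) (hB : ∀ t ∈ B, F (γ₀ t) ≤ c - ε)
    (hγ₀ : ∀ t, F (γ₀ t) ≤ c + ε)
    (hlink : ∀ γ : C(K, E), Set.EqOn γ γ₀ B → ∃ t, c ≤ F (γ t)) :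
    ∃ u, |F u - c| ≤ ε ∧ (1 + ‖u‖) * ‖fderiv ℝ F u‖ < δ := by
  by_contra! hno
  obtain ⟨t₀, -⟩ := hlink γ₀ (Set.eqOn_refl _ _)
  have : Nonempty K := ⟨t₀⟩
  obtain ⟨V, hV⟩ := exists_continuous_descent_field hF (a := c - ε) (b := c - ε / 2) (c := c + ε)
    (by linarith) (half_pos hδ).le (half_lt_self hδ)
    fun u hu => hno u (abs_le.mpr ⟨by linarith [hu.1], by linarith [hu.2]⟩)
  have hclosed : IsClosed {γ : C(K, E) | Set.EqOn γ γ₀ B} := by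
    simp only [Set.EqOn, Set.ofPred_forall]
    exact isClosed_biInter fun t _ => isClosed_singleton.preimage (continuous_eval_const t)
  have hmax : ∀ γ : C(K, E), Set.EqOn γ γ₀ B → c ≤ maxAlong F γ := fun γ hγ =>
    (hlink γ hγ).elim fun t ht => ht.trans (apply_le_maxAlong hF.continuous γ t)
  obtain ⟨γ, hγ, hle, hmin⟩ := exists_almost_minimal_maxAlong hF.continuous hclosed hmax
    (show 0 < δ / 8 by positivity) (Set.eqOn_refl _ _)
  have hγle (t : K) : F (γ t) ≤ c + ε :=
    (apply_le_maxAlong hF.continuous γ t).trans (hle.trans (ciSup_le hγ₀))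
  have hdescent := eventually_maxAlong_add_smul_le hF (half_pos hδ) (V.comp γ)
    (by linarith [hmax γ hγ] : c - ε / 2 < maxAlong F γ) (fun t => (hV (γ t)).2.1)
    fun t ht => (hV (γ t)).2.2.2 ⟨ht, hγle t⟩
  obtain ⟨h, hdesc, hh₀, hh⟩ :=
    (hdescent.and (Ioc_mem_nhdsGT (one_half_pos (α := ℝ)))).exists
  have hcompetitor : Set.EqOn (γ + h • V.comp γ) γ₀ B := fun t ht => by
    have hVt : V (γ t) = 0 := (hV (γ t)).2.2.1 (by rw [hγ ht]; exact hB t ht)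
    simpa [hVt] using hγ ht
  have hmin' := hmin _ hcompetitor h ⟨hh₀.le, hh⟩ fun t => by
    simpa [norm_smul, abs_of_pos hh₀] using mul_le_mul_of_nonneg_left (hV (γ t)).1 hh₀.le
  nlinarith

end Minimax

section NehariGeometry

theorem exists_deriv_eq_zero_and_lt_of_deriv_neg {f : ℝ → ℝ} {a b : ℝ} (hab : a < b)
    (hf : ContinuousOn f (Set.Icc a b)) (hderiv : deriv f a < 0) (hle : f a ≤ f b) :
    ∃ x ∈ Set.Ioo a b, deriv f x = 0 ∧ f x < f b := by
  have hslope : ∀ᶠ z in 𝓝[>] a, slope f a z < 0 :=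
    (differentiableAt_of_deriv_ne_zero hderiv.ne).hasDerivAt.hasDerivWithinAt.limsup_slope_le'
      Set.self_notMem_Ioi hderiv
  obtain ⟨z, hz, haz⟩ := (hslope.and (Ioo_mem_nhdsGT hab)).exists
  have hza : f z < f a := by
    rw [slope_def_field, div_lt_iff₀ (sub_pos.mpr haz.1)] at hz
    linarith
  obtain ⟨x, hx, hmin⟩ := isCompact_Icc.exists_isMinOn (Set.nonempty_Icc.mpr hab.le) hf
  have hxa : f x < f a := (hmin (Set.Ioo_subset_Icc_self haz)).trans_lt hza
  have hxab : x ∈ Set.Ioo a b :=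
    ⟨hx.1.lt_of_ne (by rintro rfl; exact hxa.false),
      hx.2.lt_of_ne (by rintro rfl; exact (hxa.trans_le hle).false)⟩
  exact ⟨x, hxab, (hmin.isLocalMin (Icc_mem_nhds hxab.1 hxab.2)).deriv_eq_zero, hxa.trans_le hle⟩

variable {E : Type*} [NormedAddCommGroup E] [NormedSpace ℝ E] {F : E → ℝ} {r a : ℝ} {p q : E}

/-- The Nehari set of `F`: the nonzero points at which the radial derivative of `F` vanishes. -/
def nehariSet (F : E → ℝ) : Set E :=
  {p | p ≠ 0 ∧ fderiv ℝ F p p = 0}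

/-- The paths from `0` to a point outside the closed ball of radius `r` at which `F` is
negative. -/
def mountainPassPaths (F : E → ℝ) (r : ℝ) : Set C(unitInterval, E) :=
  {γ | γ 0 = 0 ∧ r < ‖γ 1‖ ∧ F (γ 1) < 0}

/-- The mountain pass level of `F`: the infimum of `maxAlong F` over `mountainPassPaths F r`. -/
def mountainPassLevel (F : E → ℝ) (r : ℝ) : ℝ :=
  sInf (maxAlong F '' mountainPassPaths F r)

/-- Cerami sequences of `F` at level `c`. -/
def IsCeramiSeq (F : E → ℝ) (c : ℝ) (u : ℕ → E) : Prop :=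
  Tendsto (fun n => F (u n)) atTop (𝓝 c) ∧
    Tendsto (fun n => (1 + ‖u n‖) * ‖fderiv ℝ F (u n)‖) atTop (𝓝 0)

/-- The mountain pass geometry of a `C¹` functional whose restriction to any ray through a point
of the Nehari set is maximal at that point. -/
structure NehariGeometry (F : E → ℝ) (r a : ℝ) : Prop where
  contDiff : ContDiff ℝ 1 F
  map_zero : F 0 = 0
  radius_pos : 0 < r
  level_pos : 0 < a
  le_of_norm_eq : ∀ p, ‖p‖ = r → a ≤ F p
  smul_le : ∀ p ∈ nehariSet F, ∀ t : ℝ, 0 ≤ t → F (t • p) ≤ F p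
  eventually_smul_neg : ∀ p ≠ 0, ∀ᶠ t : ℝ in atTop, F (t • p) < 0

theorem smul_mem_nehariSet {s : ℝ} (hp : p ≠ 0) (hs : s ≠ 0) (h : fderiv ℝ F (s • p) p = 0) :
    s • p ∈ nehariSet F :=
  ⟨smul_ne_zero hs hp, by rw [map_smul, h, smul_zero]⟩

namespace NehariGeometry

theorem continuous (hF : NehariGeometry F r a) : Continuous F :=
  hF.contDiff.continuous

theorem continuous_fderiv_self (hF : NehariGeometry F r a) :
    Continuous fun p => fderiv ℝ F p p :=
  (hF.contDiff.continuous_fderiv one_ne_zero).clm_apply continuous_id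

theorem radial_fderiv_pos_of_lt (hF : NehariGeometry F r a) (hp : p ≠ 0) {T : ℝ} (hT : 0 ≤ T)
    (hlt : F p < F (T • p)) : 0 < (T - 1) * fderiv ℝ F p p := by
  let f : ℝ → ℝ := fun θ => F ((1 + θ * (T - 1)) • p)
  have hf (θ : ℝ) : HasDerivAt f ((T - 1) * fderiv ℝ F ((1 + θ * (T - 1)) • p) p) θ := by
    have hcurve : HasDerivAt (fun θ : ℝ => (1 + θ * (T - 1)) • p) ((T - 1) • p) θ := by
      simpa using (((hasDerivAt_id θ).mul_const (T - 1)).const_add 1).smul_const p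
    simpa [f, Function.comp_def] using
      (hF.contDiff.differentiable one_ne_zero _).hasFDerivAt.comp_hasDerivAt θ hcurve
  have hf₀ : f 0 = F p := by simp [f]
  have hf₁ : f 1 = F (T • p) := by simp [f]
  have hT₁ : T - 1 ≠ 0 := by
    rintro h
    rw [sub_eq_zero.mp h, one_smul] at hlt
    exact hlt.false
  by_contra! hle
  rcases hle.eq_or_lt with hzero | hneg
  · have hmem : p ∈ nehariSet F := ⟨hp, (mul_eq_zero.mp hzero).resolve_left hT₁⟩
    exact (hF.smul_le p hmem T hT).not_gt hlt
  · obtain ⟨x, hx, hfx, hxlt⟩ := exists_deriv_eq_zero_and_lt_of_deriv_neg one_pos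
      (fun θ _ => (hf θ).continuousAt.continuousWithinAt)
      (by rw [(hf 0).deriv]; simpa using hneg) (by rw [hf₀, hf₁]; exact hlt.le)
    rw [(hf x).deriv] at hfx
    have hs : 0 < 1 + x * (T - 1) := by nlinarith [hx.1, hx.2, mul_nonneg hx.1.le hT]
    have hmem := smul_mem_nehariSet hp hs.ne' ((mul_eq_zero.mp hfx).resolve_left hT₁)
    have hmax := hF.smul_le _ hmem (T / (1 + x * (T - 1))) (by positivity)
    rw [smul_smul, div_mul_cancel₀ _ hs.ne', ← hf₁] at hmax
    exact hmax.not_gt hxlt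

theorem fderiv_self_neg (hF : NehariGeometry F r a) (hp : F p < 0) : fderiv ℝ F p p < 0 := by
  have hp₀ : p ≠ 0 := by
    rintro rfl
    exact (hF.map_zero ▸ hp).false
  simpa using hF.radial_fderiv_pos_of_lt hp₀ le_rfl (by rwa [zero_smul, hF.map_zero])

theorem le_apply_smul (hF : NehariGeometry F r a) (hp : p ≠ 0) : a ≤ F ((r / ‖p‖) • p) := by
  refine hF.le_of_norm_eq _ ?_
  rw [norm_smul, norm_div, norm_norm, Real.norm_of_nonneg hF.radius_pos.le,
    div_mul_cancel₀ _ (norm_ne_zero_iff.mpr hp)]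

theorem fderiv_self_pos (hF : NehariGeometry F r a) (hp : p ≠ 0) (hpr : ‖p‖ < r) (hpa : F p < a) :
    0 < fderiv ℝ F p p := by
  have hT : 1 < r / ‖p‖ := (one_lt_div (norm_pos_iff.mpr hp)).mpr hpr
  exact pos_of_mul_pos_right (hF.radial_fderiv_pos_of_lt hp (zero_le_one.trans hT.le)
    (hpa.trans_le (hF.le_apply_smul hp))) (sub_pos.mpr hT).le

theorem eventually_fderiv_self_nonneg (hF : NehariGeometry F r a) :
    ∀ᶠ p in 𝓝 0, 0 ≤ fderiv ℝ F p p := by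
  filter_upwards [Metric.ball_mem_nhds (0 : E) hF.radius_pos,
    hF.continuous.continuousAt.eventually (gt_mem_nhds (hF.map_zero.trans_lt hF.level_pos))]
    with p hpr hpa
  obtain rfl | hp := eq_or_ne p 0
  · simp
  · exact (hF.fderiv_self_pos hp (by simpa using hpr) hpa).le

theorem inter_nehariSet_nonempty (hF : NehariGeometry F r a) {S : Set E} (hS : IsPreconnected S)
    (h₀ : 0 ∈ S) (hq : q ∈ S) (hFq : F q < 0) : (S ∩ nehariSet F).Nonempty := by
  obtain ⟨ρ, hρ, hball⟩ := Metric.eventually_nhds_iff_ball.mp hF.eventually_fderiv_self_nonneg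
  by_contra hempty
  have hcover : S ⊆ (Metric.ball 0 ρ ∪ {p | 0 < fderiv ℝ F p p}) ∪ {p | fderiv ℝ F p p < 0} := by
    intro p hp
    obtain rfl | hp₀ := eq_or_ne p 0
    · exact .inl (.inl (Metric.mem_ball_self hρ))
    · rcases lt_trichotomy (fderiv ℝ F p p) 0 with hneg | hzero | hpos
      · exact .inr hneg
      · exact absurd ⟨p, hp, hp₀, hzero⟩ hempty
      · exact .inl (.inr hpos)
  obtain ⟨p, -, hp | hp, hneg⟩ := hS _ _
    (Metric.isOpen_ball.union (isOpen_lt continuous_const hF.continuous_fderiv_self))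
    (isOpen_lt hF.continuous_fderiv_self continuous_const) hcover
    ⟨0, h₀, .inl (Metric.mem_ball_self hρ)⟩ ⟨q, hq, hF.fderiv_self_neg hFq⟩
  · exact (hball p hp).not_gt hneg
  · exact lt_asymm (show 0 < fderiv ℝ F p p from hp) hneg

theorem exists_mem_nehariSet_of_mem_mountainPassPaths (hF : NehariGeometry F r a)
    {γ : C(unitInterval, E)} (hγ : γ ∈ mountainPassPaths F r) : ∃ t, γ t ∈ nehariSet F := by
  obtain ⟨_, ⟨t, rfl⟩, ht⟩ := hF.inter_nehariSet_nonempty (isPreconnected_range γ.continuous)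
    ⟨0, hγ.1⟩ ⟨1, rfl⟩ hγ.2.2
  exact ⟨t, ht⟩

theorem exists_ray_mem_mountainPassPaths (hF : NehariGeometry F r a) (hp : p ≠ 0) :
    ∃ γ ∈ mountainPassPaths F r, ∀ t, ∃ s : ℝ, 0 ≤ s ∧ γ t = s • p := by
  obtain ⟨T, hneg, hT₀, hTr⟩ := ((hF.eventually_smul_neg p hp).and
    ((eventually_ge_atTop 0).and (eventually_gt_atTop (r / ‖p‖)))).exists
  refine ⟨⟨fun t => ((t : ℝ) * T) • p, by fun_prop⟩, ⟨by simp, ?_, by simpa using hneg⟩,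
    fun t => ⟨t * T, mul_nonneg t.2.1 hT₀, rfl⟩⟩
  simpa [norm_smul, abs_of_nonneg hT₀] using (div_lt_iff₀ (norm_pos_iff.mpr hp)).mp hTr

theorem le_apply_of_mem_nehariSet (hF : NehariGeometry F r a) (hp : p ∈ nehariSet F) : a ≤ F p :=
  (hF.le_apply_smul hp.1).trans
    (hF.smul_le p hp _ (div_nonneg hF.radius_pos.le (norm_nonneg p)))

theorem bddBelow_image_nehariSet (hF : NehariGeometry F r a) : BddBelow (F '' nehariSet F) :=
  ⟨a, Set.forall_mem_image.mpr fun _ hp => hF.le_apply_of_mem_nehariSet hp⟩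

theorem sInf_image_nehariSet_le_maxAlong (hF : NehariGeometry F r a) {γ : C(unitInterval, E)}
    (hγ : γ ∈ mountainPassPaths F r) : sInf (F '' nehariSet F) ≤ maxAlong F γ :=
  have ⟨t, ht⟩ := hF.exists_mem_nehariSet_of_mem_mountainPassPaths hγ
  (csInf_le hF.bddBelow_image_nehariSet ⟨_, ht, rfl⟩).trans (apply_le_maxAlong hF.continuous γ t)

variable [Nontrivial E]

theorem mountainPassPaths_nonempty (hF : NehariGeometry F r a) :
    (mountainPassPaths F r).Nonempty :=
  have ⟨_, hp⟩ := exists_ne (0 : E)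
  have ⟨γ, hγ, _⟩ := hF.exists_ray_mem_mountainPassPaths hp
  ⟨γ, hγ⟩

theorem nehariSet_nonempty (hF : NehariGeometry F r a) : (nehariSet F).Nonempty :=
  have ⟨_, hγ⟩ := hF.mountainPassPaths_nonempty
  have ⟨_, ht⟩ := hF.exists_mem_nehariSet_of_mem_mountainPassPaths hγ
  ⟨_, ht⟩

theorem mountainPassLevel_eq_sInf_image_nehariSet (hF : NehariGeometry F r a) :
    mountainPassLevel F r = sInf (F '' nehariSet F) := by
  refine le_antisymm (le_csInf (hF.nehariSet_nonempty.image F) ?_)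
    (le_csInf (hF.mountainPassPaths_nonempty.image _) ?_)
  · rintro _ ⟨p, hp, rfl⟩
    obtain ⟨γ, hγ, hray⟩ := hF.exists_ray_mem_mountainPassPaths hp.1
    refine csInf_le_of_le ⟨_, Set.forall_mem_image.mpr fun _ =>
      hF.sInf_image_nehariSet_le_maxAlong⟩ ⟨γ, hγ, rfl⟩ (ciSup_le fun t => ?_)
    obtain ⟨s, hs, hγt⟩ := hray t
    rw [hγt]
    exact hF.smul_le p hp s hs
  · exact Set.forall_mem_image.mpr fun _ => hF.sInf_image_nehariSet_le_maxAlong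

theorem le_mountainPassLevel (hF : NehariGeometry F r a) : a ≤ mountainPassLevel F r := by
  rw [hF.mountainPassLevel_eq_sInf_image_nehariSet]
  exact le_csInf (hF.nehariSet_nonempty.image F)
    (Set.forall_mem_image.mpr fun _ hp => hF.le_apply_of_mem_nehariSet hp)

theorem exists_cerami_point [CompleteSpace E] (hF : NehariGeometry F r a) {ε δ : ℝ} (hε : 0 < ε)
    (hδ : 0 < δ) :
    ∃ u, |F u - mountainPassLevel F r| ≤ ε ∧ (1 + ‖u‖) * ‖fderiv ℝ F u‖ < δ := by
  set c := mountainPassLevel F r with hc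
  have hcpos : 0 < c := hF.level_pos.trans_le hF.le_mountainPassLevel
  have hεc : 0 < min ε c := lt_min hε hcpos
  obtain ⟨_, ⟨γ₀, hγ₀, rfl⟩, hlt⟩ :=
    Real.lt_sInf_add_pos (hF.mountainPassPaths_nonempty.image (maxAlong F)) hεc
  have hends : ∀ t ∈ ({0, 1} : Set unitInterval), F (γ₀ t) ≤ c - min ε c := by
    have hmin := min_le_right ε c
    rintro _ (rfl | rfl)
    · rw [hγ₀.1, hF.map_zero]
      linarith
    · linarith [hγ₀.2.2]
  obtain ⟨u, hu, hfderiv⟩ := exists_cerami_point_of_minimax hF.contDiff hεc hδ hends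
    (fun t => (apply_le_maxAlong hF.continuous γ₀ t).trans hlt.le) fun γ hγ => by
      have hγ_mem : γ ∈ mountainPassPaths F r := by
        simpa [mountainPassPaths, hγ (Set.mem_insert _ _), hγ (.inr rfl)] using hγ₀
      obtain ⟨t, ht⟩ := hF.exists_mem_nehariSet_of_mem_mountainPassPaths hγ_mem
      refine ⟨t, ?_⟩
      rw [hc, hF.mountainPassLevel_eq_sInf_image_nehariSet]
      exact csInf_le hF.bddBelow_image_nehariSet ⟨_, ht, rfl⟩
  exact ⟨u, hu.trans (min_le_left _ _), hfderiv⟩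

theorem exists_isCeramiSeq [CompleteSpace E] (hF : NehariGeometry F r a) :
    ∃ u, IsCeramiSeq F (mountainPassLevel F r) u := by
  choose u hval hderiv using fun n : ℕ =>
    hF.exists_cerami_point (Nat.one_div_pos_of_nat (α := ℝ) (n := n)) Nat.one_div_pos_of_nat
  refine ⟨u, tendsto_iff_norm_sub_tendsto_zero.mpr ?_, ?_⟩
  · exact squeeze_zero (fun _ => norm_nonneg _) hval tendsto_one_div_add_atTop_nhds_zero_nat
  · exact squeeze_zero (fun _ => by positivity) (fun n => (hderiv n).le)
      tendsto_one_div_add_atTop_nhds_zero_nat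

end NehariGeometry

end NehariGeometry

section Envelope

variable {X Y : Type*} [NormedAddCommGroup X] [NormedSpace ℝ X] [NormedAddCommGroup Y]
  [NormedSpace ℝ Y]

theorem hasFDerivAt_of_forall_le_fiber {Φ : X × Y → ℝ} {Φ' : X × Y →L[ℝ] ℝ} {f : X → Y} {p : X}
    (hΦ : HasStrictFDerivAt Φ Φ' (p, f p)) (hf : ContinuousAt f p)
    (hmax : ∀ q y, Φ (q, y) ≤ Φ (q, f q)) :
    HasFDerivAt (fun q => Φ (q, f q)) (Φ'.comp (.inl ℝ X Y)) p := by
  rw [hasFDerivAt_iff_isLittleO, Asymptotics.isLittleO_iff]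
  intro ε hε
  have hbound := Asymptotics.isLittleO_iff.mp hΦ.isLittleO hε
  have hlower : Tendsto (fun q => ((q, f p), (p, f p))) (𝓝 p) (𝓝 ((p, f p), (p, f p))) :=
    ContinuousAt.tendsto (f := fun q => ((q, f p), (p, f p))) (by fun_prop)
  have hupper : Tendsto (fun q => ((q, f q), (p, f q))) (𝓝 p) (𝓝 ((p, f p), (p, f p))) :=
    ContinuousAt.tendsto (f := fun q => ((q, f q), (p, f q))) (by fun_prop)
  filter_upwards [hlower.eventually hbound, hupper.eventually hbound] with q hlow hupp
  have hnorm : ‖((q - p, 0) : X × Y)‖ = ‖q - p‖ := by simp [Prod.norm_def]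
  simp only [Prod.mk_sub_mk, sub_self, hnorm, Real.norm_eq_abs, abs_le] at hlow hupp
  simp only [ContinuousLinearMap.comp_apply, ContinuousLinearMap.inl_apply, Real.norm_eq_abs,
    abs_le]
  constructor <;> linarith [hmax q (f p), hmax p (f q)]

end Envelope

section Reduction

variable {P Q : Type*} [NormedAddCommGroup P] [InnerProductSpace ℝ P] [NormedAddCommGroup Q]
  [NormedSpace ℝ Q] {I : P × Q → ℝ} {m : P → P × Q} {r a : ℝ} {p : P}

theorem norm_snd_le_XNorm {P Q : Type*} [NormedAddCommGroup P] [NormedAddCommGroup Q]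
    (u : P × Q) : ‖u.2‖ ≤ XNorm u :=
  Real.le_sqrt_of_sq_le (le_add_of_nonneg_left (sq_nonneg _))

namespace IsMMap

theorem fst_apply (hm : IsMMap I m) (p : P) : (m p).1 = p :=
  (hm.mem p).2

theorem mk_snd_apply (hm : IsMMap I m) (p : P) : (p, (m p).2) = m p :=
  Prod.ext (hm.fst_apply p).symm rfl

theorem map_zero (hm : IsMMap I m) (hI : HypI I r a) : m 0 = 0 := by
  refine (hm.uniq 0 0 (fun v => ?_) rfl).symm
  have hmin : IsLocalMin I 0 := .of_forall fun u => hI.i1.2.1.trans_le (hI.i1.2.2 u)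
  simp [hmin.fderiv_eq_zero]

theorem apply_lt_of_ne (hm : IsMMap I m) (hI : HypI I r a) {y : Q} (hy : y ≠ (m p).2) :
    I (m p) < I (p, y) := by
  have hshift : m p + (0, y - (m p).2) = (p, y) := by
    rw [← hm.mk_snd_apply p]
    simp
  rw [← hshift]
  exact hI.i5 _ (hm.mem p).1 _ (sub_ne_zero.mpr hy)

theorem apply_le (hm : IsMMap I m) (hI : HypI I r a) (p : P) (y : Q) : I (m p) ≤ I (p, y) := by
  obtain rfl | hy := eq_or_ne y (m p).2
  · rw [hm.mk_snd_apply]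
  · exact (hm.apply_lt_of_ne hI hy).le

section Continuity

variable {x : ℕ → P}

theorem exists_norm_snd_le (hm : IsMMap I m) (hI : HypI I r a) (hx : Tendsto x atTop (𝓝 p)) :
    ∃ R, ∀ n, ‖(m (x n)).2‖ ≤ R := by
  have hcomp : Tendsto (fun n => ‖x n‖ + I (x n, 0)) atTop (𝓝 (‖p‖ + I (p, 0))) :=
    hx.norm.add ((hI.i1.1.continuous.tendsto _).comp (hx.prodMk_nhds tendsto_const_nhds))
  obtain ⟨C, hC⟩ := hcomp.bddAbove_range
  obtain ⟨R, hR⟩ := hI.i4 (C + 1)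
  refine ⟨R, fun n => ?_⟩
  by_contra! hlt
  have hlarge := hR _ (hlt.le.trans (norm_snd_le_XNorm _))
  rw [hm.fst_apply] at hlarge
  linarith [hm.apply_le hI (x n) 0, hC ⟨n, rfl⟩]

theorem tendsto_apply_mk_snd (hm : IsMMap I m) (hI : HypI I r a) (hx : Tendsto x atTop (𝓝 p)) :
    Tendsto (fun n => I (x n, (m p).2)) atTop (𝓝 (I (m p))) := by
  rw [← hm.mk_snd_apply p]
  exact (hI.i1.1.continuous.tendsto _).comp (hx.prodMk_nhds tendsto_const_nhds)

theorem eq_snd_of_tConv (hm : IsMMap I m) (hI : HypI I r a) {v : Q}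
    (hx : Tendsto x atTop (𝓝 p)) (hT : TConv (fun n => m (x n)) (p, v)) : v = (m p).2 := by
  by_contra hne
  obtain ⟨c, hc, hcv⟩ := exists_between (hm.apply_lt_of_ne hI hne)
  refine hc.not_ge (ge_of_tendsto (hm.tendsto_apply_mk_snd hI hx) ?_)
  filter_upwards [hI.i2 _ _ hT c hcv] with n hn
  exact hn.le.trans (hm.apply_le hI _ _)

theorem tendsto_of_tConv (hm : IsMMap I m) (hI : HypI I r a) (hx : Tendsto x atTop (𝓝 p))
    (hT : TConv (fun n => m (x n)) (m p)) : Tendsto (fun n => m (x n)) atTop (𝓝 (m p)) := by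
  refine hI.i3 _ _ hT (tendsto_order.mpr ⟨hI.i2 _ _ hT, fun c hc => ?_⟩)
  filter_upwards [(hm.tendsto_apply_mk_snd hI hx).eventually (gt_mem_nhds hc)] with n hn
  exact (hm.apply_le hI _ _).trans_lt hn

protected theorem continuous (hm : IsMMap I m) (hI : HypI I r a) : Continuous m := by
  refine continuous_iff_seqContinuous.mpr fun x p hx => tendsto_of_subseq_tendsto fun ns hns => ?_
  have hy : Tendsto (x ∘ ns) atTop (𝓝 p) := hx.comp hns
  obtain ⟨R, hR⟩ := hm.exists_norm_snd_le hI hy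
  obtain ⟨v, φ, hφ, hv⟩ := exists_subseq_tendsto_weakly_of_reflexive hI.refl hR
  have hyφ : Tendsto (fun n => x (ns (φ n))) atTop (𝓝 p) := hy.comp hφ.tendsto_atTop
  have hT : TConv (fun n => m (x (ns (φ n)))) (p, v) := by
    refine ⟨?_, hv⟩
    simpa only [hm.fst_apply] using hyφ
  refine ⟨φ, hm.tendsto_of_tConv hI hyφ ?_⟩
  rwa [← hm.mk_snd_apply p, ← hm.eq_snd_of_tConv hI hyφ hT]

end Continuity

end IsMMap

theorem contDiff_Jfun (hI : ContDiff ℝ 1 I) : ContDiff ℝ 1 (Jfun I) :=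
  ((contDiff_fst.norm_sq ℝ).div_const 2).sub hI

theorem fderiv_Jfun_apply {u : P × Q} (hI : DifferentiableAt ℝ I u) (v : P × Q) :
    fderiv ℝ (Jfun I) u v = inner ℝ u.1 v.1 - fderiv ℝ I u v := by
  have hsq : HasFDerivAt (fun w : P × Q => ‖w.1‖ ^ 2 / 2)
      ((innerSL ℝ u.1).comp (.fst ℝ P Q)) u := by
    have := (hasFDerivAt_fst (𝕜 := ℝ) (p := u)).norm_sq.mul_const (1 / 2)
    convert! this using 1
    · ext; ring
    · ext <;> simp
  rw [HasFDerivAt.fderiv (f := Jfun I) (hsq.sub hI.hasFDerivAt)]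
  rfl

namespace IsMMap

theorem Jfun_le_apply (hm : IsMMap I m) (hI : HypI I r a) (p : P) (y : Q) :
    Jfun I (p, y) ≤ Jfun I (m p) := by
  have hle := hm.apply_le hI p y
  simp only [Jfun, hm.fst_apply]
  linarith

theorem hasFDerivAt_Jfun_comp (hm : IsMMap I m) (hI : HypI I r a) (p : P) :
    HasFDerivAt (fun q => Jfun I (m q)) ((fderiv ℝ (Jfun I) (m p)).comp (.inl ℝ P Q)) p := by
  have hstrict : HasStrictFDerivAt (Jfun I) (fderiv ℝ (Jfun I) (m p)) (p, (m p).2) := by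
    rw [hm.mk_snd_apply]
    exact (contDiff_Jfun hI.i1.1).contDiffAt.hasStrictFDerivAt one_ne_zero
  simpa only [hm.mk_snd_apply] using hasFDerivAt_of_forall_le_fiber (f := fun q => (m q).2)
    hstrict (hm.continuous hI).snd.continuousAt fun q y => by
      simpa only [hm.mk_snd_apply] using hm.Jfun_le_apply hI q y

theorem contDiff_Jfun_comp (hm : IsMMap I m) (hI : HypI I r a) :
    ContDiff ℝ 1 fun p => Jfun I (m p) :=
  contDiff_one_iff_hasFDerivAt.mpr ⟨_,
    (((contDiff_Jfun hI.i1.1).continuous_fderiv one_ne_zero).comp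
      (hm.continuous hI)).clm_comp continuous_const, hm.hasFDerivAt_Jfun_comp hI⟩

theorem fderiv_Jfun_comp_self (hm : IsMMap I m) (hI : HypI I r a) (p : P) :
    fderiv ℝ (fun q => Jfun I (m q)) p p = fderiv ℝ (Jfun I) (m p) (m p) := by
  have hvert : fderiv ℝ (Jfun I) (m p) (0, (m p).2) = 0 := by
    rw [fderiv_Jfun_apply (hI.i1.1.differentiable one_ne_zero _), (hm.mem p).1]
    simp
  have hsplit : m p = (p, 0) + (0, (m p).2) := by
    rw [← hm.mk_snd_apply p]
    simp
  rw [(hm.hasFDerivAt_Jfun_comp hI p).fderiv]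
  conv_rhs => rw [hsplit, map_add, ← hsplit, hvert, add_zero]
  rfl

theorem apply_mem_NSet_iff (hm : IsMMap I m) (hI : HypI I r a) :
    m p ∈ NSet I ↔ p ∈ nehariSet fun q => Jfun I (m q) := by
  simp only [NSet, nehariSet, Set.mem_ofPred_eq, hm.fst_apply, hm.fderiv_Jfun_comp_self hI,
    (hm.mem p).1, true_and]

theorem image_NSet (hm : IsMMap I m) (hI : HypI I r a) :
    Jfun I '' NSet I = (fun p => Jfun I (m p)) '' nehariSet fun p => Jfun I (m p) := by
  ext y
  constructor
  · rintro ⟨u, hu, rfl⟩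
    have hum : u = m u.1 := hm.uniq _ u hu.1 rfl
    exact ⟨u.1, (hm.apply_mem_NSet_iff hI).mp (hum ▸ hu), by simp only [← hum]⟩
  · rintro ⟨p, hp, rfl⟩
    exact ⟨m p, (hm.apply_mem_NSet_iff hI).mpr hp, rfl⟩

theorem Jfun_apply_smul_le (hm : IsMMap I m) (hI : HypI I r a) (hp : m p ∈ NSet I) {t : ℝ}
    (ht : 0 ≤ t) : Jfun I (m (t • p)) ≤ Jfun I (m p) := by
  have hradial : fderiv ℝ I (m p) (m p) = ‖p‖ ^ 2 := by
    have hzero := hp.2.2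
    rw [fderiv_Jfun_apply (hI.i1.1.differentiable one_ne_zero _), real_inner_self_eq_norm_sq,
      hm.fst_apply] at hzero
    linarith
  have hshift : t • m p + (0, (m (t • p)).2 - t • (m p).2) = m (t • p) := by
    rw [← hm.mk_snd_apply p, ← hm.mk_snd_apply (t • p)]
    simp
  have hle := hI.i8 _ hp t ht ((m (t • p)).2 - t • (m p).2)
  rw [hshift, hradial] at hle
  simp only [Jfun, hm.fst_apply, norm_smul, mul_pow, Real.norm_eq_abs, sq_abs]
  linarith

theorem tendsto_apply_smul_div_sq (hm : IsMMap I m) (hI : HypI I r a) (hp : p ≠ 0) :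
    Tendsto (fun t : ℝ => I (m (t • p)) / t ^ 2) atTop atTop := by
  refine tendsto_of_seq_tendsto fun t ht => ?_
  refine (hI.i7 t (fun n => (p, (t n)⁻¹ • (m (t n • p)).2)) p ht tendsto_const_nhds hp).congr' ?_
  filter_upwards [ht.eventually_ne_atTop 0] with n hn
  rw [Prod.smul_mk, smul_inv_smul₀ hn, hm.mk_snd_apply, Function.comp_apply]

theorem eventually_Jfun_apply_smul_neg (hm : IsMMap I m) (hI : HypI I r a) (hp : p ≠ 0) :
    ∀ᶠ t : ℝ in atTop, Jfun I (m (t • p)) < 0 := by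
  filter_upwards [(hm.tendsto_apply_smul_div_sq hI hp).eventually_gt_atTop (‖p‖ ^ 2 / 2),
    eventually_gt_atTop 0] with t hlarge ht
  rw [lt_div_iff₀ (by positivity)] at hlarge
  simp only [Jfun, hm.fst_apply, norm_smul, mul_pow, Real.norm_eq_abs, sq_abs]
  linarith

end IsMMap

namespace HypI

theorem le_Jfun_of_norm_eq (hI : HypI I r a) (hp : ‖p‖ = r) : a ≤ Jfun I (p, 0) := by
  obtain ⟨-, ha, hpos⟩ := hI.i6
  have hbdd : BddBelow {y : ℝ | ∃ p : P, ‖p‖ = r ∧ y = Jfun I (p, 0)} := by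
    by_contra hunbdd
    exact hpos.ne' (ha.trans (Real.sInf_of_not_bddBelow hunbdd))
  exact ha.trans_le (csInf_le hbdd ⟨p, hp, rfl⟩)

theorem nontrivial (hI : HypI I r a) : Nontrivial P := by
  obtain ⟨hr, ha, hpos⟩ := hI.i6
  obtain ⟨_, p, hp, -⟩ : {y : ℝ | ∃ p : P, ‖p‖ = r ∧ y = Jfun I (p, 0)}.Nonempty := by
    by_contra! hempty
    rw [hempty, Real.sInf_empty] at ha
    exact hpos.ne' ha
  exact ⟨p, 0, norm_pos_iff.mp (hp ▸ hr)⟩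

end HypI

namespace IsMMap

theorem nehariGeometry (hm : IsMMap I m) (hI : HypI I r a) :
    NehariGeometry (fun p => Jfun I (m p)) r a where
  contDiff := hm.contDiff_Jfun_comp hI
  map_zero := by simp [Jfun, hm.map_zero hI, hI.i1.2.1]
  radius_pos := hI.i6.1
  level_pos := hI.i6.2.2
  le_of_norm_eq p hp := (hI.le_Jfun_of_norm_eq hp).trans (hm.Jfun_le_apply hI p 0)
  smul_le _ hp _ ht := hm.Jfun_apply_smul_le hI ((hm.apply_mem_NSet_iff hI).mpr hp) ht
  eventually_smul_neg _ hp := hm.eventually_Jfun_apply_smul_neg hI hp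

theorem cM_eq_mountainPassLevel (hm : IsMMap I m) (hI : HypI I r a) :
    cM I r = mountainPassLevel (fun p => Jfun I (m p)) r := by
  refine congrArg sInf (Set.ext fun y => ⟨?_, ?_⟩)
  · rintro ⟨γ, hγM, hγ₀, hγr, hγneg, rfl⟩
    have hγm (t) : m (γ t).1 = γ t := (hm.uniq _ _ (hγM t) rfl).symm
    refine ⟨⟨fun t => (γ t).1, by fun_prop⟩, ⟨congrArg Prod.fst hγ₀, hγr, ?_⟩, ?_⟩
    · exact (congrArg (Jfun I) (hγm _)).trans_lt hγneg
    · exact congrArg sSup (congrArg Set.range (funext fun t => congrArg (Jfun I) (hγm t)))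
  · rintro ⟨γ, ⟨hγ₀, hγr, hγneg⟩, rfl⟩
    refine ⟨⟨fun t => m (γ t), (hm.continuous hI).comp γ.continuous⟩, fun t => (hm.mem _).1,
      ?_, ?_, hγneg, rfl⟩
    · exact (congrArg m hγ₀).trans (hm.map_zero hI)
    · exact hγr.trans_eq (congrArg norm (hm.fst_apply _)).symm

end IsMMap

end Reduction

theorem abstract_cerami_and_nehari_level
    {P Q : Type*}
    [NormedAddCommGroup P] [InnerProductSpace ℝ P] [CompleteSpace P]
    [NormedAddCommGroup Q] [NormedSpace ℝ Q] [CompleteSpace Q]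
    (I : P × Q → ℝ) (r a : ℝ)
    (hI : HypI I r a)
    (m : P → P × Q) (hm : IsMMap I m) :
    -- (a)
    (a ≤ cM I r ∧ 0 < a ∧
      ∃ u : ℕ → P,
        Tendsto (fun n => Jfun I (m (u n))) atTop (nhds (cM I r)) ∧
        Tendsto (fun n => (1 + ‖u n‖) * ‖fderiv ℝ (fun p => Jfun I (m p)) (u n)‖)
          atTop (nhds 0)) ∧
    -- (b)
    cM I r = sInf (Jfun I '' NSet I) := by
  have hF := hm.nehariGeometry hI
  have := hI.nontrivial
  rw [hm.cM_eq_mountainPassLevel hI, hm.image_NSet hI]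
  exact ⟨⟨hF.le_mountainPassLevel, hF.level_pos, hF.exists_isCeramiSeq⟩,
    hF.mountainPassLevel_eq_sInf_image_nehariSet⟩
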